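/- For every integer k ≥ 2 and each n ∈ {4k-2, 4k-1}, the cactus B(n; 2k, n-2k+1) contains no cycle of length 2k+1 as a subgraph, is not bipartite, and has exactly ⌊n²/4⌋ edges; hence for these n the bipartite Turán graph T_{n,2} is not the unique extremal C_{2k+1}-free graph, and the Simonovits threshold n₀(C_{2k+1}) is at least 4k. -/

import Mathlib

/-!
The main point is that a `C_{2k+1}`-free graph `G` on `n ∈ {4k - 2, 4k - 1}` vertices has at most
`n² / 4` edges; then the cactus attains `ex(n; C_{2k+1})`. Assume that `G` has more than `n² / 4`
edges.

* `G` has a cycle of length at least `2k + 1`. Otherwise a bound of Woodall and Kopylov type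
  (`ds_le_of_circumference`) applies: on `m ≤ 4k - 1` vertices there are at most `k (m - 1)` edges,
  and at most `k (m - 1) - (k - 1)` unless `m ∈ {1, 2k, 4k - 1}`. For both values of `n` this is at
  most `n² / 4`. The bound is proved by induction on `m`. A vertex of degree at most `1` can be
  deleted. If all degrees are at least `2`, the Erdős–Gallai rotation argument (`exists_removable`)
  gives a set `A` of fewer than `2k` vertices meeting at most `k |A|` edges, which is deleted. The
  saving `k - 1` is inherited unless `2k` vertices are left. In that case either these miss enough
  edges, or they are Hamilton-connected (`exists_hamiltonian_path`); then each vertex of `A` has at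
  most one neighbour among them, and `A` meets few edges.
* With a longest cycle of length `c ≥ 2k + 1 > n / 2`, there are cycles of all lengths from `3` to
  `c` (`exists_cycle_of_le_circumference`). Vertices off the cycle whose degree is at most half of
  the current order `m` are deleted, which keeps the number of edges above `m² / 4`. If only the
  cycle is left, it is Hamiltonian and Bondy's theorem applies (`bondy`). Otherwise the two ends of
  a longest path off the cycle have so many neighbours on the cycle that a longer cycle appears
  (`attach`).

In the cactus, a cycle stays within one block, and both blocks have at most `2k` vertices. Its edges
are counted directly, and it contains a triangle, so it is neither bipartite nor isomorphic to a
complete bipartite graph.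

Paths and cycles are handled as sequences `ℕ → V` of which an initial segment is relevant, and edges
of induced subgraphs are counted through degree sums.
-/

open SimpleGraph

/-- `G` contains a cycle of length `L` as a subgraph, i.e. a copy of `C_L`. -/
def ContainsCycleLength {V : Type*} (G : SimpleGraph V) (L : ℕ) : Prop :=
  ∃ (v : V) (w : G.Walk v v), w.IsCycle ∧ w.length = L

/-- The number of edges of a graph. -/
noncomputable def edgeCount {V : Type*} (G : SimpleGraph V) : ℕ :=
  G.edgeSet.ncard

/-- The Turán number `ex(n; C_{2k+1})`: the maximum number of edges of a simple graph on
`n` vertices containing no cycle of length `2k+1`. -/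
noncomputable def exC (n k : ℕ) : ℕ :=
  sSup {m | ∃ G : SimpleGraph (Fin n), ¬ ContainsCycleLength G (2 * k + 1) ∧ edgeCount G = m}


/-- The cactus `B(n; 2k, n-2k+1)`: a complete graph on the first `2k` vertices and a complete
graph on the last `n-2k+1` vertices, sharing exactly the vertex with index `2k-1`. -/
def cactusB (n k : ℕ) : SimpleGraph (Fin n) :=
  SimpleGraph.fromRel (fun v w =>
    ((v : ℕ) < 2 * k ∧ (w : ℕ) < 2 * k) ∨ (2 * k - 1 ≤ (v : ℕ) ∧ 2 * k - 1 ≤ (w : ℕ)))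


set_option linter.unusedSectionVars false

namespace OddCycleExt

/-! ### Degree sums, paths and cycles inside a finite set of vertices -/

variable {V : Type*} [DecidableEq V] (G : SimpleGraph V) [DecidableRel G.Adj]

/-- The neighbours of `v` inside the finite set `W`. -/
def nb (W : Finset V) (v : V) : Finset V := W.filter (G.Adj v)

/-- The degree sum of the subgraph induced on `W`, that is, twice its number of edges. -/
def ds (W : Finset V) : ℕ := ∑ v ∈ W, (nb G W v).card

/-- `f 0, …, f (p - 1)` is a path of `G` with `p` distinct vertices, all of them in `W`;
the values `f i` with `p ≤ i` are irrelevant. -/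
structure IsPathIn (W : Finset V) (p : ℕ) (f : ℕ → V) : Prop where
  mem : ∀ i < p, f i ∈ W
  inj : ∀ i < p, ∀ j < p, f i = f j → i = j
  adj : ∀ i, i + 1 < p → G.Adj (f i) (f (i + 1))

/-- `f 0, …, f (c - 1)` is, in this cyclic order, a cycle of length `c` of `G` inside `W`. -/
structure IsCycIn (W : Finset V) (c : ℕ) (f : ℕ → V) : Prop extends IsPathIn G W c f where
  three_le : 3 ≤ c
  close : G.Adj (f (c - 1)) (f 0)

variable {G}

lemma mem_nb {W : Finset V} {v u : V} : u ∈ nb G W v ↔ u ∈ W ∧ G.Adj v u := by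
  simp [nb]

lemma nb_mono {W W' : Finset V} (h : W ⊆ W') (v : V) : nb G W v ⊆ nb G W' v := by
  intro u; simp only [mem_nb]; exact fun hu => ⟨h hu.1, hu.2⟩

lemma IsPathIn.mono {W W' : Finset V} (h : W ⊆ W') {p : ℕ} {f : ℕ → V} (hf : IsPathIn G W p f) :
    IsPathIn G W' p f := ⟨fun i hi => h (hf.mem i hi), hf.inj, hf.adj⟩

lemma IsCycIn.mono {W W' : Finset V} (h : W ⊆ W') {p : ℕ} {f : ℕ → V} (hf : IsCycIn G W p f) :
    IsCycIn G W' p f := ⟨hf.toIsPathIn.mono h, hf.three_le, hf.close⟩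

/-- The vertex set of `f 0, …, f (p - 1)` has `p` elements. -/
lemma card_image_of_inj {p : ℕ} {f : ℕ → V} (h : ∀ i < p, ∀ j < p, f i = f j → i = j) :
    ((Finset.range p).image f).card = p := by
  rw [Finset.card_image_of_injOn, Finset.card_range]
  intro i hi j hj hij
  exact h i (by simpa using hi) j (by simpa using hj) hij

lemma IsPathIn.le_card {W : Finset V} {p : ℕ} {f : ℕ → V} (hf : IsPathIn G W p f) :
    p ≤ W.card := by
  rw [← card_image_of_inj hf.inj]
  apply Finset.card_le_card
  intro x hx
  simp only [Finset.mem_image, Finset.mem_range] at hx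
  obtain ⟨i, hi, rfl⟩ := hx
  exact hf.mem i hi

lemma IsCycIn.containsCycleLength {W : Finset V} {c : ℕ} {f : ℕ → V} (hf : IsCycIn G W c f) :
    ContainsCycleLength G c := by
  have h3 := hf.three_le
  refine (cycleGraph_isContained_iff (by omega)).1 ⟨⟨⟨fun i : Fin c => f i, ?_⟩, ?_⟩⟩
  · have key : ∀ x y : Fin c, (x - y).val = 1 → G.Adj (f x) (f y) := by
      intro x y hxy
      rcases lt_or_ge x y with h | h
      · rw [Fin.coe_sub_iff_lt.mpr h] at hxy
        have hx : (x : ℕ) = 0 := by omega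
        have hy : (y : ℕ) = c - 1 := by omega
        rw [hx, hy]; exact hf.close.symm
      · rw [Fin.sub_val_of_le h] at hxy
        have hx : (x : ℕ) = y + 1 := by omega
        rw [hx]; exact (hf.adj y (by omega)).symm
    intro x y hxy
    rcases cycleGraph_adj'.mp hxy with h | h
    · exact key x y h
    · exact (key y x h).symm
  · intro x y hxy
    exact Fin.ext (hf.inj x x.2 y y.2 hxy)

/-- A cycle may be started at any of its vertices. -/
lemma IsCycIn.rot {W : Finset V} {c : ℕ} {f : ℕ → V} (hf : IsCycIn G W c f) {a : ℕ} (ha : a < c) :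
    IsCycIn G W c (fun i => if i + a < c then f (i + a) else f (i + a - c)) := by
  have h3 := hf.three_le
  refine ⟨⟨?_, ?_, ?_⟩, h3, ?_⟩
  · intro i hi
    split_ifs
    · exact hf.mem _ (by omega)
    · exact hf.mem _ (by omega)
  · intro i hi j hj hij
    split_ifs at hij
    all_goals
      have := hf.inj _ (by omega) _ (by omega) hij
      omega
  · intro i hi
    split_ifs with h1 h2 h2
    · rw [show i + 1 + a = i + a + 1 by omega]; exact hf.adj _ (by omega)
    · rw [show i + 1 + a - c = 0 by omega, show i + a = c - 1 by omega]; exact hf.close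
    · omega
    · rw [show i + 1 + a - c = i + a - c + 1 by omega]; exact hf.adj _ (by omega)
  · by_cases h0 : a = 0
    · subst h0
      rw [if_pos (by omega), if_pos (by omega)]; exact hf.close
    · rw [if_neg (by omega), if_pos (by omega)]
      have := hf.adj (c - 1 + a - c) (by omega)
      rwa [show c - 1 + a - c + 1 = 0 + a by omega] at this

/-- `e(A, B)` as the number of pairs is symmetric in `A` and `B`. -/
lemma sum_nb_comm (A B : Finset V) :
    ∑ a ∈ A, (nb G B a).card = ∑ b ∈ B, (nb G A b).card := by
  simp only [nb, Finset.card_filter]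
  rw [Finset.sum_comm]
  simp only [G.adj_comm]

lemma card_nb_union {A B : Finset V} (h : Disjoint A B) (v : V) :
    (nb G (A ∪ B) v).card = (nb G A v).card + (nb G B v).card := by
  rw [nb, Finset.filter_union, Finset.card_union_of_disjoint]
  · rfl
  · exact Finset.disjoint_filter_filter h

lemma ds_union {A B : Finset V} (h : Disjoint A B) :
    ds G (A ∪ B) = ds G A + ds G B + 2 * ∑ a ∈ A, (nb G B a).card := by
  rw [ds, Finset.sum_union h]
  simp only [card_nb_union h, Finset.sum_add_distrib]
  rw [sum_nb_comm B A, ← ds, ← ds]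
  ring

lemma ds_sdiff {A W : Finset V} (h : A ⊆ W) :
    ds G W = ds G (W \ A) + ds G A + 2 * ∑ a ∈ A, (nb G (W \ A) a).card := by
  have := ds_union (G := G) (Finset.disjoint_sdiff (s := A) (t := W))
  rw [Finset.union_sdiff_of_subset h] at this
  omega

lemma card_nb_le {W : Finset V} {v : V} (hv : v ∈ W) : (nb G W v).card ≤ W.card - 1 := by
  rw [← Finset.card_erase_of_mem hv]
  apply Finset.card_le_card
  intro u hu
  rw [mem_nb] at hu
  exact Finset.mem_erase.2 ⟨fun e => G.loopless.irrefl v (e ▸ hu.2), hu.1⟩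

lemma ds_le (W : Finset V) : ds G W ≤ W.card * (W.card - 1) := by
  rw [ds]
  exact (Finset.sum_le_card_nsmul _ _ _ fun v hv => card_nb_le hv).trans (by simp)

lemma ds_erase {W : Finset V} {v : V} (hv : v ∈ W) :
    ds G W = ds G (W.erase v) + 2 * (nb G W v).card := by
  have h := ds_sdiff (G := G) (Finset.singleton_subset_iff.2 hv)
  have h1 : ds G {v} = 0 := by
    have := ds_le (G := G) {v}
    simpa using this
  rw [h1, Finset.sdiff_singleton_eq_erase] at h
  have h2 : nb G (W.erase v) v = nb G W v := by
    ext u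
    simp only [mem_nb, Finset.mem_erase]
    exact ⟨fun h => ⟨h.1.2, h.2⟩, fun h => ⟨⟨fun e => G.loopless.irrefl v (e ▸ h.2), h.1⟩, h.2⟩⟩
  simpa [h2] using h

lemma exists_max_nat (P : ℕ → Prop) (B : ℕ) (hne : ∃ n, P n) (hb : ∀ n, P n → n ≤ B) :
    ∃ n, P n ∧ ∀ m, P m → m ≤ n := by
  classical
  obtain ⟨n, hn⟩ := hne
  exact ⟨Nat.findGreatest P B, Nat.findGreatest_spec (hb n hn) hn,
    fun m hm => Nat.le_findGreatest (hb m hm) hm⟩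

/-! ### Bondy's pancyclicity argument -/

/-- Degrees into the vertex set of a path can be counted by positions on the path. -/
lemma card_nb_image {p : ℕ} {f : ℕ → V} (h : ∀ i < p, ∀ j < p, f i = f j → i = j) (v : V) :
    (nb G ((Finset.range p).image f) v).card
      = ((Finset.range p).filter fun i => G.Adj v (f i)).card := by
  rw [nb, Finset.filter_image, Finset.card_image_of_injOn]
  intro i hi j hj hij
  simp only [Finset.coe_filter, Finset.mem_range, Set.mem_ofPred_eq] at hi hj
  exact h i hi.1 j hj.1 hij

lemma IsPathIn.image_subset {W : Finset V} {p : ℕ} {f : ℕ → V} (hf : IsPathIn G W p f) :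
    (Finset.range p).image f ⊆ W := by
  intro x hx
  simp only [Finset.mem_image, Finset.mem_range] at hx
  obtain ⟨i, hi, rfl⟩ := hx
  exact hf.mem i hi

/-- If the vertices of `W`, in the cyclic order `f 0, …, f (n - 1)`, form a cycle and `G` has no
cycle of length `l` in `W`, then the degrees of the consecutive vertices `f 0` and `f (n - 1)` add
up to at most `n`: each neighbour `f i` of `f 0` forbids one neighbour `f (φ i)` of `f (n - 1)`. -/
lemma bondy_pair {W : Finset V} {n l : ℕ} {f : ℕ → V} (hf : IsCycIn G W n f) (hW : W.card = n)
    (hl3 : 3 ≤ l) (hln : l ≤ n) (hno : ∀ q, ¬ IsCycIn G W l q) :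
    (nb G W (f 0)).card + (nb G W (f (n - 1))).card ≤ n := by
  have h3 := hf.three_le
  have himg : (Finset.range n).image f = W :=
    Finset.eq_of_subset_of_card_le hf.image_subset (by rw [card_image_of_inj hf.inj, hW])
  rw [← himg, card_nb_image hf.inj, card_nb_image hf.inj]
  set IX := (Finset.range n).filter fun i => G.Adj (f 0) (f i) with hIX
  set IY := (Finset.range n).filter fun i => G.Adj (f (n - 1)) (f i) with hIY
  have mX : ∀ i, i ∈ IX ↔ i < n ∧ G.Adj (f 0) (f i) := by simp [hIX]
  have mY : ∀ i, i ∈ IY ↔ i < n ∧ G.Adj (f (n - 1)) (f i) := by simp [hIY]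
  have hX0 : ∀ i ∈ IX, i ≠ 0 := by
    rintro i hi rfl
    exact G.loopless.irrefl _ ((mX 0).1 hi).2
  have hY0 : ∀ i ∈ IY, i ≠ n - 1 := by
    rintro i hi rfl
    exact G.loopless.irrefl _ ((mY _).1 hi).2
  let φ : ℕ → ℕ := fun i => if i + l - 3 ≤ n - 2 then i + l - 3 else i + l - n - 1
  have build : ∀ σ : ℕ → ℕ, (∀ t < l, σ t < n) → (∀ s < l, ∀ t < l, σ s = σ t → s = t) →
      (∀ t, t + 1 < l → G.Adj (f (σ t)) (f (σ (t + 1)))) →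
      G.Adj (f (σ (l - 1))) (f (σ 0)) → False := by
    intro σ h1 h2 h4 h5
    exact hno (fun t => f (σ t)) ⟨⟨fun t ht => hf.mem _ (h1 t ht),
      fun s hs t ht hst => h2 s hs t ht (hf.inj _ (h1 s hs) _ (h1 t ht) hst), h4⟩, hl3, h5⟩
  have hdisj : ∀ i ∈ IX, i ≠ n - 1 → φ i ∉ IY := by
    intro i hi hin hφ
    have hi0 := hX0 i hi
    obtain ⟨hi1, hi2⟩ := (mX i).1 hi
    obtain ⟨hj1, hj2⟩ := (mY _).1 hφ
    by_cases hc : i + l - 3 ≤ n - 2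
    · -- the cycle `f 0, f i, f (i + 1), …, f (i + l - 3), f (n - 1)`
      have hφi : φ i = i + l - 3 := if_pos hc
      rw [hφi] at hj1 hj2
      refine build (fun t => if t = 0 then 0 else if t = l - 1 then n - 1 else i + t - 1)
        ?_ ?_ ?_ ?_
      · intro t ht; split_ifs <;> omega
      · intro s hs t ht hst; split_ifs at hst <;> omega
      · intro t ht
        by_cases ht0 : t = 0
        · subst ht0
          rw [if_pos rfl, if_neg (by omega), if_neg (by omega)]
          simpa using hi2
        · rw [if_neg ht0, if_neg (by omega), if_neg (by omega)]
          by_cases ht1 : t + 1 = l - 1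
          · rw [if_pos ht1, show i + t - 1 = i + l - 3 by omega]; exact hj2.symm
          · rw [if_neg ht1, show i + (t + 1) - 1 = i + t - 1 + 1 by omega]
            exact hf.adj _ (by omega)
      · rw [if_neg (by omega), if_pos rfl, if_pos rfl]; exact hf.close
    · -- the cycle `f 0, …, f j, f (n - 1), f (n - 2), …, f i` with `j = i + l - n - 1`
      have hφi : φ i = i + l - n - 1 := if_neg hc
      rw [hφi] at hj1 hj2
      refine build (fun t => if t ≤ i + l - n - 1 then t else n + (i + l - n - 1) - t)
        ?_ ?_ ?_ ?_
      · intro t ht; split_ifs <;> omega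
      · intro s hs t ht hst; split_ifs at hst <;> omega
      · intro t ht
        by_cases h1 : t + 1 ≤ i + l - n - 1
        · rw [if_pos (by omega), if_pos h1]; exact hf.adj _ (by omega)
        · rw [if_neg h1]
          by_cases h2 : t ≤ i + l - n - 1
          · rw [if_pos h2, show t = i + l - n - 1 by omega,
              show n + (i + l - n - 1) - (i + l - n - 1 + 1) = n - 1 by omega]
            exact hj2.symm
          · rw [if_neg h2, show n + (i + l - n - 1) - t = n + (i + l - n - 1) - (t + 1) + 1 by omega]
            exact (hf.adj _ (by omega)).symm
      · rw [if_neg (by omega), if_pos (by omega),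
          show n + (i + l - n - 1) - (l - 1) = i by omega]
        exact hi2.symm
  have hcard : ((IX.erase (n - 1)).image φ ∪ IY.erase 0).card ≤ (Finset.Icc 1 (n - 2)).card := by
    apply Finset.card_le_card
    intro x hx
    simp only [Finset.mem_union, Finset.mem_image, Finset.mem_erase] at hx
    rw [Finset.mem_Icc]
    rcases hx with ⟨i, ⟨hi1, hi2⟩, rfl⟩ | ⟨hx1, hx2⟩
    · have := hX0 i hi2
      have := ((mX i).1 hi2).1
      simp only [φ]
      split_ifs <;> omega
    · have := hY0 x hx2
      have := ((mY x).1 hx2).1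
      omega
  rw [Finset.card_union_of_disjoint, Finset.card_image_of_injOn, Nat.card_Icc] at hcard
  · have h1 := Finset.pred_card_le_card_erase (s := IX) (a := n - 1)
    have h2 := Finset.pred_card_le_card_erase (s := IY) (a := 0)
    omega
  · intro i hi j hj hij
    simp only [Finset.coe_erase, Set.mem_sdiff, Finset.mem_coe, Set.mem_singleton_iff] at hi hj
    have := hX0 i hi.1
    have := ((mX i).1 hi.1).1
    have := hX0 j hj.1
    have := ((mX j).1 hj.1).1
    simp only [φ] at hij
    split_ifs at hij <;> omega
  · rw [Finset.disjoint_left]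
    intro x hx hx2
    simp only [Finset.mem_image, Finset.mem_erase] at hx hx2
    obtain ⟨i, ⟨hi1, hi2⟩, rfl⟩ := hx
    exact hdisj i hi2 hi1 hx2.2

/-- Bondy: a graph with a Hamiltonian cycle on `n` vertices and more than `n² / 4` edges has
cycles of all lengths `3 ≤ l ≤ n`. -/
lemma bondy {W : Finset V} {n l : ℕ} {f : ℕ → V} (hf : IsCycIn G W n f) (hW : W.card = n)
    (hl3 : 3 ≤ l) (hln : l ≤ n) (hno : ∀ q, ¬ IsCycIn G W l q) :
    2 * ds G W ≤ n * n := by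
  have h3 := hf.three_le
  have himg : (Finset.range n).image f = W :=
    Finset.eq_of_subset_of_card_le hf.image_subset (by rw [card_image_of_inj hf.inj, hW])
  have hds : ds G W = ∑ i ∈ Finset.range n, (nb G W (f i)).card := by
    rw [ds]
    conv_lhs => rw [← himg]
    rw [Finset.sum_image]
    · rw [himg]
    · intro i hi j hj hij
      exact hf.inj i (by simpa using hi) j (by simpa using hj) hij
  obtain ⟨m, rfl⟩ : ∃ m, n = m + 1 := ⟨n - 1, by omega⟩
  have hpair : ∀ i < m, (nb G W (f (i + 1))).card + (nb G W (f i)).card ≤ m + 1 := by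
    intro i hi
    have h := bondy_pair (hf.rot (a := i + 1) (by omega)) hW hl3 hln hno
    rw [if_pos (by omega), if_neg (by omega),
      show m + 1 - 1 + (i + 1) - (m + 1) = i by omega, zero_add] at h
    exact h
  have hlast := bondy_pair hf hW hl3 hln hno
  rw [Nat.add_sub_cancel] at hlast
  have hsum := Finset.sum_le_card_nsmul (Finset.range m) _ _
    (fun i hi => hpair i (Finset.mem_range.1 hi))
  rw [Finset.sum_add_distrib, Finset.card_range, smul_eq_mul] at hsum
  have e1 : ds G W = ∑ i ∈ Finset.range m, (nb G W (f i)).card + (nb G W (f m)).card := by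
    rw [hds, Finset.sum_range_succ]
  have e2 : ds G W = ∑ i ∈ Finset.range m, (nb G W (f (i + 1))).card + (nb G W (f 0)).card := by
    rw [hds, Finset.sum_range_succ']
  nlinarith

/-! ### Long cycles and paths attached to them -/

/-- If a path `q 0, …, q (p - 1)` avoids a cycle and its ends are adjacent to `f (c - j)` and
`f 0` with `1 ≤ j ≤ p`, then it can replace the `j - 1` vertices in between, which gives a longer
cycle. -/
lemma attach_core {S U : Finset V} {c p j : ℕ} {f q : ℕ → V} (hf : IsCycIn G S c f)
    (hq : IsPathIn G U p q) (hdis : Disjoint S U)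
    (hno : ∀ c' > c, ∀ g, ¬ IsCycIn G (S ∪ U) c' g) (hpc : p < c) (hj1 : 1 ≤ j) (hjp : j ≤ p)
    (hy : G.Adj (q (p - 1)) (f 0)) (hx : G.Adj (q 0) (f (c - j))) : False := by
  have h3 := hf.three_le
  have hne : ∀ i < c, ∀ t < p, f i ≠ q t := fun i hi t ht e =>
    Finset.disjoint_left.1 hdis (hf.mem i hi) (e ▸ hq.mem t ht)
  refine hno (c - j + 1 + p) (by omega)
    (fun t => if t ≤ c - j then f t else q (t - (c - j + 1))) ⟨⟨?_, ?_, ?_⟩, by omega, ?_⟩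
  · intro t ht
    split_ifs
    · exact Finset.mem_union_left _ (hf.mem _ (by omega))
    · exact Finset.mem_union_right _ (hq.mem _ (by omega))
  · intro s hs t ht hst
    split_ifs at hst
    · exact hf.inj _ (by omega) _ (by omega) hst
    · exact absurd hst (hne _ (by omega) _ (by omega))
    · exact absurd hst.symm (hne _ (by omega) _ (by omega))
    · have := hq.inj _ (by omega) _ (by omega) hst
      omega
  · intro t ht
    split_ifs with h1 h2 h2
    · exact hf.adj _ (by omega)
    · rw [show t = c - j by omega, show c - j + 1 - (c - j + 1) = 0 by omega]; exact hx.symm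
    · omega
    · rw [show t + 1 - (c - j + 1) = t - (c - j + 1) + 1 by omega]; exact hq.adj _ (by omega)
  · rw [if_neg (by omega), if_pos (by omega),
      show c - j + 1 + p - 1 - (c - j + 1) = p - 1 by omega]
    exact hy

/-- The ends of a path with `p` vertices outside a longest cycle of length `c` have, if both have
any, at most `c - p + 1` neighbours on the cycle in total. Positions on the cycle are counted from
a neighbour `f 0` of `q (p - 1)`. -/
lemma attach_zero {S U : Finset V} {c p : ℕ} {f q : ℕ → V} (hf : IsCycIn G S c f)
    (hS : S.card = c) (hq : IsPathIn G U p q) (hdis : Disjoint S U)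
    (hno : ∀ c' > c, ∀ g, ¬ IsCycIn G (S ∪ U) c' g) (hp : 0 < p) (hpc : p < c)
    (hy : G.Adj (q (p - 1)) (f 0)) (hx : (nb G S (q 0)).Nonempty) :
    (nb G S (q 0)).card + (nb G S (q (p - 1))).card + p ≤ c + 1 := by
  have h3 := hf.three_le
  have himg : (Finset.range c).image f = S :=
    Finset.eq_of_subset_of_card_le hf.image_subset (by rw [card_image_of_inj hf.inj, hS])
  have hgap : ∀ a j, a + j < c → 1 ≤ j → j ≤ p → G.Adj (q 0) (f a) →
      G.Adj (q (p - 1)) (f (a + j)) → False := by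
    intro a j haj hj1 hjp hxa hyb
    refine attach_core (hf.rot haj) hq hdis hno hpc hj1 hjp ?_ ?_
    · rw [zero_add, if_pos haj]; exact hyb
    · rw [if_neg (by omega), show c - j + (a + j) - c = a by omega]; exact hxa
  have hend : ∀ a < c, G.Adj (q 0) (f a) → a + p < c := by
    intro a hac hxa
    by_contra hcon
    exact attach_core hf hq hdis hno hpc (j := c - a) (by omega) (by omega) hy
      (by rwa [show c - (c - a) = a by omega])
  have hX := card_nb_image (G := G) hf.inj (q 0)
  rw [himg] at hX
  have hY := card_nb_image (G := G) hf.inj (q (p - 1))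
  rw [himg] at hY
  rw [← Finset.card_pos, hX, Finset.card_pos] at hx
  rw [hX, hY]
  set IX := (Finset.range c).filter fun i => G.Adj (q 0) (f i) with hIX
  set IY := (Finset.range c).filter fun i => G.Adj (q (p - 1)) (f i) with hIY
  have mX : ∀ i, i ∈ IX ↔ i < c ∧ G.Adj (q 0) (f i) := by simp [hIX]
  have mY : ∀ i, i ∈ IY ↔ i < c ∧ G.Adj (q (p - 1)) (f i) := by simp [hIY]
  -- no neighbour of `q (p - 1)` sits directly after one of `q 0`, nor within `p` steps after the
  -- last one
  obtain ⟨a, ha, hamax⟩ := IX.exists_max_image id hx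
  have ha' := (mX a).1 ha
  have hap := hend a ha'.1 ha'.2
  have hcard : ((IX.image (· + 1) ∪ Finset.Icc (a + 2) (a + p)) ∪ IY).card
      ≤ (Finset.range c).card := by
    apply Finset.card_le_card
    intro x hx
    simp only [Finset.mem_union, Finset.mem_image, Finset.mem_Icc] at hx
    rw [Finset.mem_range]
    rcases hx with (⟨i, hi, rfl⟩ | hx) | hx
    · have := hend i ((mX i).1 hi).1 ((mX i).1 hi).2
      omega
    · omega
    · exact ((mY x).1 hx).1
  rw [Finset.card_union_of_disjoint, Finset.card_union_of_disjoint, Finset.card_range,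
    Finset.card_image_of_injective _ (fun _ _ h => by simpa using h), Nat.card_Icc] at hcard
  · omega
  · rw [Finset.disjoint_left]
    intro x hx1 hx2
    simp only [Finset.mem_image, Finset.mem_Icc] at hx1 hx2
    obtain ⟨i, hi, rfl⟩ := hx1
    have := hamax i hi
    simp only [id] at this
    omega
  · rw [Finset.disjoint_left]
    intro x hx1 hx2
    simp only [Finset.mem_union, Finset.mem_image, Finset.mem_Icc] at hx1
    rcases hx1 with ⟨i, hi, rfl⟩ | hx1
    · exact hgap i 1 ((mY _).1 hx2).1 le_rfl (by omega) ((mX i).1 hi).2 ((mY _).1 hx2).2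
    · refine hgap a (x - a) ?_ (by omega) (by omega) ha'.2 ?_
      · have := ((mY _).1 hx2).1; omega
      · rw [show a + (x - a) = x by omega]; exact ((mY _).1 hx2).2

lemma attach {S U : Finset V} {c p : ℕ} {f q : ℕ → V} (hf : IsCycIn G S c f)
    (hS : S.card = c) (hq : IsPathIn G U p q) (hdis : Disjoint S U)
    (hno : ∀ c' > c, ∀ g, ¬ IsCycIn G (S ∪ U) c' g) (hp : 0 < p) (hpc : p < c)
    (hx : (nb G S (q 0)).Nonempty) (hy : (nb G S (q (p - 1))).Nonempty) :
    (nb G S (q 0)).card + (nb G S (q (p - 1))).card + p ≤ c + 1 := by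
  have himg : (Finset.range c).image f = S :=
    Finset.eq_of_subset_of_card_le hf.image_subset (by rw [card_image_of_inj hf.inj, hS])
  obtain ⟨y, hy⟩ := hy
  rw [mem_nb] at hy
  obtain ⟨hyS, hya⟩ := hy
  rw [← himg, Finset.mem_image] at hyS
  obtain ⟨b, hb, rfl⟩ := hyS
  rw [Finset.mem_range] at hb
  refine attach_zero (hf.rot hb) hS hq hdis hno hp hpc ?_ hx
  rw [zero_add, if_pos hb]; exact hya

lemma IsPathIn.reverse {U : Finset V} {p : ℕ} {q : ℕ → V} (hq : IsPathIn G U p q) :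
    IsPathIn G U p (fun i => q (p - 1 - i)) := by
  refine ⟨fun i hi => hq.mem _ (by omega), ?_, ?_⟩
  · intro i hi j hj hij
    have := hq.inj _ (by omega) _ (by omega) hij
    omega
  · intro i hi
    rw [show p - 1 - i = p - 1 - (i + 1) + 1 by omega]
    exact (hq.adj _ (by omega)).symm

/-- All neighbours of the first vertex of a longest path lie on the path. -/
lemma nb_subset_of_longest {U : Finset V} {p : ℕ} {q : ℕ → V} (hq : IsPathIn G U p q)
    (hno : ∀ q', ¬ IsPathIn G U (p + 1) q') :
    nb G U (q 0) ⊆ (Finset.range p).image q := by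
  intro u hu
  rw [mem_nb] at hu
  by_contra hcon
  have hne : ∀ i < p, q i ≠ u := fun i hi e =>
    hcon (Finset.mem_image.2 ⟨i, Finset.mem_range.2 hi, e⟩)
  refine hno (fun i => if i = 0 then u else q (i - 1)) ⟨?_, ?_, ?_⟩
  · intro i hi
    split_ifs
    · exact hu.1
    · exact hq.mem _ (by omega)
  · intro i hi j hj hij
    split_ifs at hij
    · omega
    · exact absurd hij.symm (hne _ (by omega))
    · exact absurd hij (hne _ (by omega))
    · have := hq.inj _ (by omega) _ (by omega) hij
      omega
  · intro i hi
    rw [if_neg (by omega : ¬ i + 1 = 0)]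
    split_ifs with h
    · subst h; exact hu.2.symm
    · have := hq.adj (i - 1) (by omega)
      rwa [show i - 1 + 1 = i + 1 - 1 by omega] at this

lemma card_nb_longest {U : Finset V} {p : ℕ} {q : ℕ → V} (hq : IsPathIn G U p q) (hp : 0 < p)
    (hno : ∀ q', ¬ IsPathIn G U (p + 1) q') : (nb G U (q 0)).card ≤ p - 1 := by
  have hsub : nb G U (q 0) ⊆ nb G ((Finset.range p).image q) (q 0) := by
    intro u hu
    exact mem_nb.2 ⟨nb_subset_of_longest hq hno hu, (mem_nb.1 hu).2⟩
  have h := card_nb_le (G := G) (W := (Finset.range p).image q) (v := q 0)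
    (Finset.mem_image_of_mem _ (Finset.mem_range.2 hp))
  rw [card_image_of_inj hq.inj] at h
  exact (Finset.card_le_card hsub).trans h

lemma exists_longest_path {U : Finset V} (hU : U.Nonempty) :
    ∃ p q, 0 < p ∧ IsPathIn G U p q ∧ ∀ q', ¬ IsPathIn G U (p + 1) q' := by
  obtain ⟨u, hu⟩ := hU
  obtain ⟨p, ⟨q, hq⟩, hmax⟩ := exists_max_nat (fun p => ∃ q, IsPathIn G U p q) U.card
    ⟨1, fun _ => u, fun _ _ => hu, fun i hi j hj _ => by omega, fun i hi => by omega⟩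
    (fun p ⟨q, hq⟩ => hq.le_card)
  have h1 : 1 ≤ p := hmax 1
    ⟨fun _ => u, fun _ _ => hu, fun i hi j hj _ => by omega, fun i hi => by omega⟩
  exact ⟨p, q, h1, hq, fun q' hq' => by have := hmax (p + 1) ⟨q', hq'⟩; omega⟩

/-- A graph on `n` vertices with more than `n² / 4` edges whose longest cycle has length
`c > n / 2` has cycles of all lengths `3 ≤ l ≤ c`. Vertices off the longest cycle are removed as
long as their degree is at most half of the order; if this gets stuck, a longest path off the cycle
has ends with too many neighbours on it. -/
lemma exists_cycle_of_le_circumference {W₀ : Finset V} {n c l : ℕ} {f : ℕ → V}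
    (hn : W₀.card = n) (hds : 2 * (n ^ 2 / 4) < ds G W₀) (hf : IsCycIn G W₀ c f)
    (hmax : ∀ c' > c, ∀ g, ¬ IsCycIn G W₀ c' g) (hnc : n < 2 * c) (hl3 : 3 ≤ l) (hlc : l ≤ c) :
    ∃ g, IsCycIn G W₀ l g := by
  by_contra! hno
  have h3 := hf.three_le
  set S := (Finset.range c).image f with hSdef
  have hS : S.card = c := card_image_of_inj hf.inj
  have hfS : IsCycIn G S c f :=
    ⟨⟨fun i hi => Finset.mem_image_of_mem _ (Finset.mem_range.2 hi), hf.inj, hf.adj⟩, h3, hf.close⟩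
  obtain ⟨W, hW, hWmin⟩ := Finset.exists_min_image
    (W₀.powerset.filter fun W => S ⊆ W ∧ 2 * (W.card ^ 2 / 4) < ds G W) Finset.card
    ⟨W₀, by
      rw [Finset.mem_filter, hn]
      exact ⟨Finset.mem_powerset_self _, hf.image_subset, hds⟩⟩
  simp only [Finset.mem_filter, Finset.mem_powerset] at hW hWmin
  obtain ⟨hWW₀, hSW, hWds⟩ := hW
  have hWn : W.card ≤ n := hn ▸ Finset.card_le_card hWW₀
  have hdeg : ∀ v ∈ W \ S, W.card + 1 ≤ 2 * (nb G W v).card := by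
    intro v hv
    rw [Finset.mem_sdiff] at hv
    by_contra! hlt
    have hpos : 0 < W.card := Finset.card_pos.2 ⟨v, hv.1⟩
    have hc := Finset.card_erase_of_mem hv.1
    have hle := hWmin (W.erase v) ⟨(Finset.erase_subset _ _).trans hWW₀,
      fun x hx => Finset.mem_erase.2 ⟨fun e => hv.2 (e ▸ hx), hSW hx⟩, ?_⟩
    · omega
    · have he := ds_erase (G := G) hv.1
      rw [hc]
      rcases Nat.even_or_odd' W.card with ⟨j, hj | hj⟩
      · obtain ⟨i, rfl⟩ : ∃ i, j = i + 1 := ⟨j - 1, by omega⟩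
        rw [hj] at hWds ⊢
        have e1 : (2 * (i + 1)) ^ 2 / 4 = i * i + 2 * i + 1 := by
          rw [show (2 * (i + 1)) ^ 2 = 4 * (i * i + 2 * i + 1) by ring]; omega
        have e2 : (2 * (i + 1) - 1) ^ 2 / 4 = i * i + i := by
          rw [show 2 * (i + 1) - 1 = 2 * i + 1 by omega,
            show (2 * i + 1) ^ 2 = 4 * (i * i + i) + 1 by ring]; omega
        omega
      · rw [hj] at hWds ⊢
        have e1 : (2 * j + 1) ^ 2 / 4 = j * j + j := by
          rw [show (2 * j + 1) ^ 2 = 4 * (j * j + j) + 1 by ring]; omega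
        have e2 : (2 * j + 1 - 1) ^ 2 / 4 = j * j := by
          rw [show 2 * j + 1 - 1 = 2 * j by omega, show (2 * j) ^ 2 = 4 * (j * j) by ring]; omega
        omega
  rcases (W \ S).eq_empty_or_nonempty with hemp | hne
  · have hWS : W = S := Finset.Subset.antisymm (Finset.sdiff_eq_empty_iff_subset.1 hemp) hSW
    rw [hWS, hS] at hWds
    have hb := bondy hfS hS hl3 hlc (fun q hq => hno q (hq.mono (hWS ▸ hWW₀)))
    rcases Nat.even_or_odd' c with ⟨j, hj | hj⟩
    · have e1 : c ^ 2 / 4 = j * j := by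
        rw [hj, show (2 * j) ^ 2 = 4 * (j * j) by ring]; omega
      rw [hj] at hb
      have : 2 * j * (2 * j) = 4 * (j * j) := by ring
      omega
    · have e1 : c ^ 2 / 4 = j * j + j := by
        rw [hj, show (2 * j + 1) ^ 2 = 4 * (j * j + j) + 1 by ring]; omega
      rw [hj] at hb
      have : (2 * j + 1) * (2 * j + 1) = 4 * (j * j + j) + 1 := by ring
      omega
  · obtain ⟨p, q, hp, hq, hqno⟩ := exists_longest_path (G := G) hne
    have hdis : Disjoint S (W \ S) := Finset.disjoint_sdiff
    have hun : S ∪ W \ S = W := Finset.union_sdiff_of_subset hSW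
    have hcd : (W \ S).card = W.card - c := by rw [Finset.card_sdiff_of_subset hSW, hS]
    have hcW : c ≤ W.card := hS ▸ Finset.card_le_card hSW
    have hpU := hq.le_card
    have hx := hdeg _ (hq.mem 0 hp)
    have hy := hdeg _ (hq.mem (p - 1) (by omega))
    have hx' := card_nb_longest hq hp hqno
    have hy' := card_nb_longest hq.reverse hp hqno
    rw [Nat.sub_zero] at hy'
    have hxs := card_nb_union (G := G) hdis (q 0)
    have hys := card_nb_union (G := G) hdis (q (p - 1))
    rw [hun] at hxs hys
    have := attach hfS hS hq hdis
      (fun c' hc' g hg => hmax c' hc' g (hg.mono (by rw [hun]; exact hWW₀))) hp (by omega)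
      (Finset.card_pos.1 (by omega)) (Finset.card_pos.1 (by omega))
    omega

/-! ### Removable sets: the Erdős–Gallai argument -/

/-- Pósa rotation: if `g 0` is adjacent to `g (i + 1)`, then reversing the initial segment
`g 0, …, g i` gives a path with the same vertices that starts at `g i`. -/
lemma IsPathIn.posa {W : Finset V} {p i : ℕ} {g : ℕ → V} (hg : IsPathIn G W p g) (hi : i + 1 < p)
    (ha : G.Adj (g 0) (g (i + 1))) :
    IsPathIn G W p (fun t => g (if t ≤ i then i - t else t)) := by
  refine ⟨?_, ?_, ?_⟩
  · intro t ht
    exact hg.mem _ (by split_ifs <;> omega)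
  · intro s hs t ht hst
    have := hg.inj _ (by split_ifs <;> omega) _ (by split_ifs <;> omega) hst
    split_ifs at this <;> omega
  · intro t ht
    by_cases h1 : t + 1 ≤ i
    · rw [if_pos (by omega), if_pos h1, show i - t = i - (t + 1) + 1 by omega]
      exact (hg.adj _ (by omega)).symm
    · rw [if_neg h1]
      by_cases h2 : t ≤ i
      · rw [if_pos h2, show i - t = 0 by omega, show t = i by omega]; exact ha
      · rw [if_neg h2]; exact hg.adj _ ht

/-- Erdős–Gallai: if all degrees in `W` are at least `2` and no cycle in `W` is longer than `2k`,
then some nonempty set `A` of fewer than `2k` vertices of `W` meets at most `k |A|` edges.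
Take a longest path whose first vertex has the largest possible degree; `A` consists of the first
vertices of all paths obtained from it by a single rotation. -/
lemma exists_removable {W : Finset V} {k : ℕ} (hne : W.Nonempty)
    (hdeg : ∀ v ∈ W, 2 ≤ (nb G W v).card) (hno : ∀ c > 2 * k, ∀ g, ¬ IsCycIn G W c g) :
    ∃ A ⊆ W, 1 ≤ A.card ∧ A.card ≤ 2 * k - 1 ∧ ds G W ≤ ds G (W \ A) + 2 * k * A.card := by
  obtain ⟨p, q₀, hp, hq₀, hlong⟩ := exists_longest_path (G := G) hne
  -- `s` is the largest position of a neighbour of the first vertex of a longest path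
  obtain ⟨s, ⟨f, hf, hsp, hfs⟩, hsmax⟩ := exists_max_nat
    (fun s => ∃ f, IsPathIn G W p f ∧ s < p ∧ G.Adj (f 0) (f s)) p (by
      obtain ⟨u, hu⟩ := Finset.card_pos.1 (lt_of_lt_of_le two_pos (hdeg _ (hq₀.mem 0 hp)))
      obtain ⟨i, hi, rfl⟩ := Finset.mem_image.1 (nb_subset_of_longest hq₀ hlong hu)
      exact ⟨i, q₀, hq₀, Finset.mem_range.1 hi, (mem_nb.1 hu).2⟩)
    (fun s ⟨f, _, h, _⟩ => h.le)
  obtain ⟨d, ⟨g, hg, hgd⟩, hdmax⟩ := exists_max_nat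
    (fun d => ∃ g, IsPathIn G W p g ∧ (nb G W (g 0)).card = d) W.card ⟨_, q₀, hq₀, rfl⟩
    (by rintro _ ⟨g, _, rfl⟩; exact Finset.card_le_card (Finset.filter_subset _ _))
  -- neighbours of a first vertex have positions `1, …, s`
  have hpos : ∀ h, IsPathIn G W p h → ∀ u ∈ nb G W (h 0), ∃ i < s, h (i + 1) = u := by
    intro h hh u hu
    obtain ⟨i, hi, rfl⟩ := Finset.mem_image.1 (nb_subset_of_longest hh hlong hu)
    have hi0 : i ≠ 0 := by
      rintro rfl; exact G.loopless.irrefl _ (mem_nb.1 hu).2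
    have := hsmax i ⟨h, hh, Finset.mem_range.1 hi, (mem_nb.1 hu).2⟩
    exact ⟨i - 1, by omega, by rw [show i - 1 + 1 = i by omega]⟩
  have hd2 : 2 ≤ d := hgd ▸ hdeg _ (hg.mem 0 hp)
  set I := (Finset.range s).filter fun i => G.Adj (g 0) (g (i + 1)) with hI
  have mI : ∀ i, i ∈ I ↔ i < s ∧ G.Adj (g 0) (g (i + 1)) := by simp [hI]
  have hIcard : I.card = d := by
    rw [← hgd]
    rw [show nb G W (g 0) = I.image (fun i => g (i + 1)) from ?_, Finset.card_image_of_injOn]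
    · intro i hi j hj hij
      have h1 := ((mI i).1 hi).1
      have h2 := ((mI j).1 hj).1
      have := hg.inj _ (by omega) _ (by omega) hij
      omega
    · ext u
      rw [Finset.mem_image]
      constructor
      · intro hu
        obtain ⟨i, hi, rfl⟩ := hpos g hg u hu
        exact ⟨i, (mI i).2 ⟨hi, (mem_nb.1 hu).2⟩, rfl⟩
      · rintro ⟨i, hi, rfl⟩
        have h1 := (mI i).1 hi
        exact mem_nb.2 ⟨hg.mem _ (by omega), h1.2⟩
  have hds : d ≤ s := hIcard ▸ (Finset.card_filter_le _ _).trans (by simp)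
  have hs2 : s + 1 ≤ 2 * k := by
    by_contra! hlt
    exact hno (s + 1) (by omega) f ⟨⟨fun i hi => hf.mem i (by omega),
      fun i hi j hj => hf.inj i (by omega) j (by omega), fun i hi => hf.adj i (by omega)⟩,
      by omega, by simpa using hfs.symm⟩
  set A := I.image g with hA
  have hAcard : A.card = d := by
    rw [hA, Finset.card_image_of_injOn, hIcard]
    intro i hi j hj hij
    have h1 := ((mI i).1 hi).1
    have h2 := ((mI j).1 hj).1
    exact hg.inj _ (by omega) _ (by omega) hij
  set T := (Finset.range (s + 1)).image g with hT
  have hTcard : T.card = s + 1 :=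
    card_image_of_inj fun i hi j hj => hg.inj i (by omega) j (by omega)
  have hAT : A ⊆ T := by
    rw [hA, hT]
    apply Finset.image_subset_image
    intro i hi
    have := ((mI i).1 hi).1
    rw [Finset.mem_range]; omega
  have hAW : A ⊆ W := by
    intro x hx
    obtain ⟨i, hi, rfl⟩ := Finset.mem_image.1 hx
    have := ((mI i).1 hi).1
    exact hg.mem _ (by omega)
  have hAdeg : ∀ a ∈ A, (nb G W a).card ≤ d ∧ nb G W a ⊆ T := by
    intro a ha
    obtain ⟨i, hi, rfl⟩ := Finset.mem_image.1 ha
    have h1 := (mI i).1 hi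
    have hh := hg.posa (by omega) h1.2
    have h0 : (fun t => g (if t ≤ i then i - t else t)) 0 = g i := by simp
    constructor
    · have := hdmax _ ⟨_, hh, rfl⟩
      simpa using this
    · intro u hu
      rw [← h0] at hu
      obtain ⟨j, hj, rfl⟩ := hpos _ hh u hu
      refine Finset.mem_image_of_mem _ (Finset.mem_range.2 ?_)
      split_ifs <;> omega
  refine ⟨A, hAW, by omega, by omega, ?_⟩
  have e1 := ds_sdiff (G := G) hAW
  have e2 : ∑ a ∈ A, (nb G W a).card = ds G A + ∑ a ∈ A, (nb G (W \ A) a).card := by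
    rw [ds, ← Finset.sum_add_distrib]
    refine Finset.sum_congr rfl fun a _ => ?_
    rw [← card_nb_union Finset.disjoint_sdiff, Finset.union_sdiff_of_subset hAW]
  have e3 : ∑ a ∈ A, (nb G W a).card ≤ d * d := by
    have := Finset.sum_le_card_nsmul A _ d fun a ha => (hAdeg a ha).1
    rwa [hAcard, smul_eq_mul] at this
  have e4 : ∑ a ∈ A, (nb G (W \ A) a).card ≤ d * (s + 1 - d) := by
    have := Finset.sum_le_card_nsmul A (fun a => (nb G (W \ A) a).card) (s + 1 - d) fun a ha => ?_
    · rwa [hAcard, smul_eq_mul] at this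
    · rw [← hTcard, ← hAcard, ← Finset.card_sdiff_of_subset hAT]
      apply Finset.card_le_card
      intro u hu
      rw [mem_nb, Finset.mem_sdiff] at hu
      exact Finset.mem_sdiff.2 ⟨(hAdeg a ha).2 (mem_nb.2 ⟨hu.1.1, hu.2⟩), hu.1.2⟩
  have e5 : d * d + d * (s + 1 - d) = d * (s + 1) := by
    rw [← Nat.mul_add]; congr 1; omega
  have e6 : d * (s + 1) ≤ d * (2 * k) := Nat.mul_le_mul_left _ hs2
  rw [hAcard, Nat.mul_comm (2 * k)]
  omega

/-! ### Almost complete graphs -/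

/-- Ore: a graph on `N ≥ 3` vertices that misses fewer than `(N - 2) / 2` edges is
Hamilton-connected. -/
lemma exists_hamiltonian_path {H : Finset V} {N : ℕ} (hN : H.card = N) (hN3 : 3 ≤ N)
    (hds : N * (N - 1) < ds G H + (N - 2)) {u v : V} (hu : u ∈ H) (hv : v ∈ H) (huv : u ≠ v) :
    ∃ f, IsPathIn G H N f ∧ f 0 = u ∧ f (N - 1) = v := by
  -- A longest path from `u` to `v`, where the sequence `u, v` is admitted even if `u` and `v` are
  -- not adjacent. A vertex off the path is not adjacent to consecutive vertices of it.
  obtain ⟨p, ⟨hp2, f, hmem, hinj, hadj, hf0, hf1⟩, hmax⟩ := exists_max_nat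
    (fun p => 2 ≤ p ∧ ∃ f : ℕ → V, (∀ i < p, f i ∈ H) ∧ (∀ i < p, ∀ j < p, f i = f j → i = j) ∧
      (∀ i, i + 1 < p → p = 2 ∨ G.Adj (f i) (f (i + 1))) ∧ f 0 = u ∧ f (p - 1) = v) N
    (by
      refine ⟨2, le_rfl, fun i => if i = 0 then u else v, ?_, ?_, fun _ _ => Or.inl rfl, rfl, rfl⟩
      · intro i _; dsimp only; split_ifs <;> assumption
      · intro i hi j hj hij
        dsimp only at hij
        split_ifs at hij
        · omega
        · exact absurd hij huv
        · exact absurd hij.symm huv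
        · omega)
    (by
      rintro p ⟨_, f, hmem, hinj, _⟩
      rw [← hN, ← card_image_of_inj hinj]
      apply Finset.card_le_card
      intro x hx
      obtain ⟨i, hi, rfl⟩ := Finset.mem_image.1 hx
      exact hmem i (Finset.mem_range.1 hi))
  set P := (Finset.range p).image f with hP
  have hPc : P.card = p := card_image_of_inj hinj
  have hPH : P ⊆ H := by
    intro x hx
    obtain ⟨i, hi, rfl⟩ := Finset.mem_image.1 hx
    exact hmem i (Finset.mem_range.1 hi)
  have hpN : p ≤ N := hN ▸ hPc ▸ Finset.card_le_card hPH
  rcases hpN.eq_or_lt with rfl | hlt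
  · exact ⟨f, ⟨hmem, hinj, fun i hi => (hadj i hi).resolve_left (by omega)⟩, hf0, hf1⟩
  exfalso
  have hins : ∀ w ∈ H \ P, ∀ i, i + 1 < p → G.Adj w (f i) → G.Adj w (f (i + 1)) → False := by
    intro w hw i hi h1 h2
    rw [Finset.mem_sdiff] at hw
    have hne : ∀ i < p, f i ≠ w := fun i hi e =>
      hw.2 (Finset.mem_image.2 ⟨i, Finset.mem_range.2 hi, e⟩)
    have := hmax (p + 1) ⟨by omega,
      fun t => if t ≤ i then f t else if t = i + 1 then w else f (t - 1), ?_, ?_, ?_, ?_, ?_⟩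
    · omega
    · intro t ht
      dsimp only
      split_ifs
      · exact hmem _ (by omega)
      · exact hw.1
      · exact hmem _ (by omega)
    · intro s hs t ht hst
      dsimp only at hst
      split_ifs at hst
      · exact hinj _ (by omega) _ (by omega) hst
      · exact absurd hst (hne _ (by omega))
      · have := hinj _ (by omega) _ (by omega) hst
        omega
      · exact absurd hst.symm (hne _ (by omega))
      · omega
      · exact absurd hst.symm (hne _ (by omega))
      · have := hinj _ (by omega) _ (by omega) hst
        omega
      · exact absurd hst (hne _ (by omega))
      · have := hinj _ (by omega) _ (by omega) hst
        omega
    · intro t ht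
      right
      dsimp only
      rcases lt_trichotomy t i with h | rfl | h
      · rw [if_pos (by omega), if_pos (by omega)]
        exact (hadj t (by omega)).resolve_left (by omega)
      · rw [if_pos le_rfl, if_neg (by omega), if_pos rfl]; exact h1.symm
      · rw [if_neg (by omega), if_neg (by omega : ¬ t + 1 ≤ i), if_neg (by omega : ¬ t + 1 = i + 1)]
        split_ifs with h3
        · rw [h3, Nat.add_sub_cancel]; exact h2
        · have := (hadj (t - 1) (by omega)).resolve_left (by omega)
          rwa [show t - 1 + 1 = t + 1 - 1 by omega] at this
    · simpa using hf0
    · dsimp only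
      rw [if_neg (by omega), if_neg (by omega), Nat.add_sub_cancel]
      exact hf1
  have hwdeg : ∀ w ∈ H \ P, 2 * (nb G P w).card ≤ p + 1 := by
    intro w hw
    rw [hP, card_nb_image hinj]
    set I := (Finset.range p).filter fun i => G.Adj w (f i) with hI
    have mI : ∀ i, i ∈ I ↔ i < p ∧ G.Adj w (f i) := by simp [hI]
    have : (I ∪ I.image (· + 1)).card ≤ (Finset.range (p + 1)).card := by
      apply Finset.card_le_card
      intro x hx
      rw [Finset.mem_union, Finset.mem_image] at hx
      rw [Finset.mem_range]
      rcases hx with hx | ⟨i, hi, rfl⟩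
      · have := ((mI x).1 hx).1; omega
      · have := ((mI i).1 hi).1; omega
    rw [Finset.card_union_of_disjoint, Finset.card_range,
      Finset.card_image_of_injective _ (fun _ _ h => by simpa using h)] at this
    · omega
    · rw [Finset.disjoint_left]
      intro x hx hx2
      obtain ⟨i, hi, rfl⟩ := Finset.mem_image.1 hx2
      have h1 := (mI _).1 hi
      have h2 := (mI _).1 hx
      exact hins w hw i h2.1 h1.2 h2.2
  have hc : (H \ P).card = N - p := by rw [Finset.card_sdiff_of_subset hPH, hN, hPc]
  have e1 := ds_union (G := G) (Finset.sdiff_disjoint (s := P) (t := H))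
  rw [Finset.sdiff_union_of_subset hPH] at e1
  have e2 := ds_le (G := G) P
  have e3 := ds_le (G := G) (H \ P)
  have e4 : 2 * ∑ w ∈ H \ P, (nb G P w).card ≤ (N - p) * (p + 1) := by
    rw [Finset.mul_sum, ← hc, ← smul_eq_mul]
    exact Finset.sum_le_card_nsmul _ _ _ hwdeg
  rw [hPc] at e2
  rw [hc] at e3
  obtain ⟨r, rfl⟩ : ∃ r, N = p + (r + 1) := ⟨N - p - 1, by omega⟩
  obtain ⟨m, rfl⟩ : ∃ m, p = m + 2 := ⟨p - 2, by omega⟩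
  rw [show m + 2 + (r + 1) - (m + 2) = r + 1 by omega] at e3 e4
  rw [show r + 1 - 1 = r by omega] at e3
  rw [show m + 2 - 1 = m + 1 by omega] at e2
  rw [show m + 2 + (r + 1) - 1 = m + r + 2 by omega,
    show m + 2 + (r + 1) - 2 = m + r + 1 by omega] at hds
  nlinarith

/-! ### The number of edges of a graph without long cycles -/

/-- Woodall, Kopylov (special case): the number of edges of a graph on `m ≤ 4k - 1` vertices
without cycles longer than `2k` is at most `k (m - 1)`, and smaller by at least `k - 1` unless
`m` is one of `1`, `2k`, `4k - 1`. The degree sum is twice that number. -/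
lemma ds_le_of_circumference {k : ℕ} (hk : 2 ≤ k) (m : ℕ) :
    ∀ W : Finset V, W.card = m → 1 ≤ m → m ≤ 4 * k - 1 →
    (∀ c > 2 * k, ∀ g, ¬ IsCycIn G W c g) →
    ds G W ≤ 2 * k * (m - 1) ∧
      (m ≠ 1 → m ≠ 2 * k → m ≠ 4 * k - 1 → ds G W + 2 * (k - 1) ≤ 2 * k * (m - 1)) := by
  obtain ⟨j, rfl⟩ : ∃ j, k = j + 1 := ⟨k - 1, by omega⟩
  induction m using Nat.strong_induction_on with
  | _ m ih =>
  intro W hW hm1 hm hno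
  rcases le_or_gt m (2 * (j + 1)) with hle | hgt
  · have h := ds_le (G := G) W
    rw [hW] at h
    refine ⟨h.trans (Nat.mul_le_mul_right _ hle), fun h1 h2 _ => ?_⟩
    obtain ⟨a, rfl⟩ : ∃ a, m = a + 2 := ⟨m - 2, by omega⟩
    obtain ⟨b, hb⟩ : ∃ b, 2 * (j + 1) = a + 3 + b := ⟨2 * (j + 1) - (a + 3), by omega⟩
    rw [show a + 2 - 1 = a + 1 by omega] at h ⊢
    have e : 2 * (j + 1 - 1) = a + 1 + b := by omega
    rw [hb, e]
    nlinarith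
  have hWne : W.Nonempty := Finset.card_pos.1 (by omega)
  by_cases hdeg : ∀ v ∈ W, 2 ≤ (nb G W v).card
  · obtain ⟨A, hAW, hA1, hA2, hAds⟩ := exists_removable hWne hdeg hno
    have hc : (W \ A).card = m - A.card := by rw [Finset.card_sdiff_of_subset hAW, hW]
    have hno' : ∀ c > 2 * (j + 1), ∀ g, ¬ IsCycIn G (W \ A) c g :=
      fun c hc g hg => hno c hc g (hg.mono Finset.sdiff_subset)
    obtain ⟨ih1, ih2⟩ := ih (m - A.card) (by omega) (W \ A) hc (by omega) (by omega) hno'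
    have e : 2 * (j + 1) * (m - 1) = 2 * (j + 1) * (m - A.card - 1) + 2 * (j + 1) * A.card := by
      rw [← Nat.mul_add]; congr 1; omega
    refine ⟨by omega, fun _ _ h4 => ?_⟩
    by_cases h2k : m - A.card = 2 * (j + 1)
    · by_cases hds : ds G (W \ A) + 2 * (j + 1 - 1) ≤ 2 * (j + 1) * (m - A.card - 1)
      · omega
      -- `W \ A` is almost complete, so a vertex of `A` with two neighbours in it would lie on
      -- a cycle of length `2k + 1`
      rw [h2k] at hds hc
      have hone : ∀ a ∈ A, (nb G (W \ A) a).card ≤ 1 := by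
        intro a ha
        by_contra! h
        obtain ⟨u, hu, v, hv, huv⟩ := Finset.one_lt_card.1 h
        rw [mem_nb] at hu hv
        obtain ⟨f, hf, hf0, hf1⟩ := exists_hamiltonian_path (G := G) hc (by omega) (by omega)
          hu.1 hv.1 huv
        have hne : ∀ i < 2 * (j + 1), f i ≠ a := fun i hi e =>
          (Finset.mem_sdiff.1 (hf.mem i hi)).2 (e ▸ ha)
        refine hno (2 * (j + 1) + 1) (by omega) (fun t => if t < 2 * (j + 1) then f t else a)
          ⟨⟨?_, ?_, ?_⟩, by omega, ?_⟩
        · intro t ht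
          split_ifs with h
          · exact Finset.sdiff_subset (hf.mem _ h)
          · exact hAW ha
        · intro s hs t ht hst
          split_ifs at hst
          · exact hf.inj _ (by omega) _ (by omega) hst
          · exact absurd hst (hne _ (by omega))
          · exact absurd hst.symm (hne _ (by omega))
          · omega
        · intro t ht
          rw [if_pos (by omega)]
          split_ifs with h
          · exact hf.adj _ h
          · rw [show t = 2 * (j + 1) - 1 by omega, hf1]; exact hv.2.symm
        · rw [if_neg (by omega), if_pos (by omega), hf0]; exact hu.2
      have e1 := ds_sdiff (G := G) hAW
      have e2 := ds_le (G := G) A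
      have e3 := Finset.sum_le_card_nsmul A _ 1 hone
      have e4 := ds_le (G := G) (W \ A)
      rw [smul_eq_mul, mul_one] at e3
      rw [hc] at e4
      rw [h2k] at e
      obtain ⟨x, hx⟩ : ∃ x, A.card = x + 1 := ⟨A.card - 1, by omega⟩
      obtain ⟨y, hy⟩ : ∃ y, 2 * (j + 1) = x + 2 + y := ⟨2 * (j + 1) - (x + 2), by omega⟩
      rw [hx, Nat.add_sub_cancel] at e2
      have hj : 2 * (j + 1 - 1) = x + y := by omega
      have e5 : 2 * (j + 1) * (x + 1) = (x + 2 + y) * (x + 1) := by rw [hy]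
      rw [hx] at e e3
      have hy1 : 1 ≤ y := by omega
      have hxy : x ≤ x * y := Nat.le_mul_of_pos_right x hy1
      have e6 : (x + 1) * x + 2 * (x + 1) + (x + y) ≤ (x + 2 + y) * (x + 1) := by nlinarith
      rw [hj, e, e5]
      omega
    · have := ih2 (by omega) h2k (by omega)
      omega
  · push Not at hdeg
    obtain ⟨v, hv, hvd⟩ := hdeg
    have hc : (W.erase v).card = m - 1 := by rw [Finset.card_erase_of_mem hv, hW]
    obtain ⟨ih1, -⟩ := ih (m - 1) (by omega) (W.erase v) hc (by omega) (by omega)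
      (fun c hc g hg => hno c hc g (hg.mono (Finset.erase_subset _ _)))
    have e := ds_erase (G := G) hv
    have e' : 2 * (j + 1) * (m - 1) = 2 * (j + 1) * (m - 1 - 1) + 2 * (j + 1) := by
      rw [← Nat.mul_succ]; congr 1; omega
    constructor
    · omega
    · intros; omega

/-- Every `C_{2k+1}`-free graph on `n = 4k - 2` or `n = 4k - 1` vertices has at most `n² / 4`
edges. -/
lemma ds_le_of_odd_cycle_free {k n : ℕ} (hk : 2 ≤ k) (hn : n = 4 * k - 2 ∨ n = 4 * k - 1)
    {W : Finset V} (hW : W.card = n) (hno : ∀ g, ¬ IsCycIn G W (2 * k + 1) g) :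
    ds G W ≤ 2 * (n ^ 2 / 4) := by
  by_contra! hds
  have hlong : ∃ c > 2 * k, ∃ g, IsCycIn G W c g := by
    by_contra! hcon
    obtain ⟨h1, h2⟩ := ds_le_of_circumference (G := G) hk n W hW (by omega) (by omega) hcon
    obtain ⟨j, rfl⟩ : ∃ j, k = j + 1 := ⟨k - 1, by omega⟩
    rcases hn with hn | hn
    · have h3 := h2 (by omega) (by omega) (by omega)
      rw [show n = 4 * j + 2 by omega] at h3 hds
      rw [show 4 * j + 2 - 1 = 4 * j + 1 by omega, Nat.add_sub_cancel] at h3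
      rw [show (4 * j + 2) ^ 2 / 4 = 4 * j * j + 4 * j + 1 by
        rw [show (4 * j + 2) ^ 2 = 4 * (4 * j * j + 4 * j + 1) by ring]; omega] at hds
      nlinarith
    · rw [show n = 4 * j + 3 by omega] at h1 hds
      rw [show 4 * j + 3 - 1 = 4 * j + 2 by omega] at h1
      rw [show (4 * j + 3) ^ 2 / 4 = 4 * (j * j) + 6 * j + 2 by
        rw [show (4 * j + 3) ^ 2 = 4 * (4 * (j * j) + 6 * j + 2) + 1 by ring]; omega] at hds
      nlinarith
  obtain ⟨c₀, hc₀, g₀, hg₀⟩ := hlong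
  obtain ⟨c, ⟨f, hf⟩, hmax⟩ := exists_max_nat (fun c => ∃ f, IsCycIn G W c f) W.card
    ⟨c₀, g₀, hg₀⟩ (fun c ⟨f, hf⟩ => hf.le_card)
  have hc := hmax c₀ ⟨g₀, hg₀⟩
  obtain ⟨g, hg⟩ := exists_cycle_of_le_circumference (G := G) (l := 2 * k + 1) hW hds hf
    (fun c' hc' g hg => by have := hmax c' ⟨g, hg⟩; omega) (by omega) (by omega) (by omega)
  exact hno g hg

/-! ### The Turán number -/

lemma ds_univ_eq {n : ℕ} (G : SimpleGraph (Fin n)) [DecidableRel G.Adj] :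
    ds G Finset.univ = 2 * edgeCount G := by
  rw [edgeCount, ← coe_edgeFinset G, Set.ncard_coe_finset, ← sum_degrees_eq_twice_card_edges, ds]
  refine Finset.sum_congr rfl fun v _ => ?_
  rw [← card_neighborFinset_eq_degree]
  congr 1
  ext u
  simp [nb]

lemma edgeCount_le {k n : ℕ} (hk : 2 ≤ k) (hn : n = 4 * k - 2 ∨ n = 4 * k - 1)
    (G : SimpleGraph (Fin n)) (hG : ¬ ContainsCycleLength G (2 * k + 1)) :
    edgeCount G ≤ n ^ 2 / 4 := by
  classical
  have h := ds_le_of_odd_cycle_free (G := G) hk hn (W := Finset.univ) (by simp)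
    (fun g hg => hG hg.containsCycleLength)
  rw [ds_univ_eq] at h
  omega

/-! ### The cactus -/

lemma cactusB_adj {n k : ℕ} {v w : Fin n} : (cactusB n k).Adj v w ↔ v ≠ w ∧
    (((v : ℕ) < 2 * k ∧ (w : ℕ) < 2 * k) ∨ (2 * k - 1 ≤ (v : ℕ) ∧ 2 * k - 1 ≤ (w : ℕ))) := by
  rw [cactusB, fromRel_adj]
  tauto

/-- A cycle longer than both blocks has a vertex `a` that lies only in the first block and a
vertex that lies only in the second one. Started at `a`, it passes the cut vertex directly before
its first and directly after its last visit to the vertices `> 2k - 1`, hence twice. -/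
lemma cactusB_not_containsCycleLength {k n : ℕ} (hn : n < 4 * k) :
    ¬ ContainsCycleLength (cactusB n k) (2 * k + 1) := by
  rintro ⟨v, w, hw, hlen⟩
  have hk : 1 ≤ k := by have := hw.three_le_length; omega
  have hcard : w.support.tail.toFinset.card = 2 * k + 1 := by
    rw [List.toFinset_card_of_nodup hw.support_nodup]
    simp [hlen]
  have hmem : ∀ {x}, x ∈ w.support.tail.toFinset → x ∈ w.support := fun hx =>
    List.mem_of_mem_tail (List.mem_toFinset.1 hx)
  -- each of the two blocks has at most `2k` vertices, so the cycle leaves both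
  obtain ⟨a, ha, hak⟩ : ∃ a ∈ w.support, (a : ℕ) < 2 * k - 1 := by
    by_contra! hcon
    have : w.support.tail.toFinset.card ≤ (Finset.Ico (2 * k - 1) n).card :=
      Finset.card_le_card_of_injOn (fun x => (x : ℕ))
        (fun x hx => by simpa using hcon x (hmem hx)) (fun x _ y _ h => Fin.ext h)
    rw [hcard, Nat.card_Ico] at this
    omega
  obtain ⟨b, hb, hbk⟩ : ∃ b ∈ w.support, 2 * k - 1 < (b : ℕ) := by
    by_contra! hcon
    have : w.support.tail.toFinset.card ≤ (Finset.range (2 * k)).card :=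
      Finset.card_le_card_of_injOn (fun x => (x : ℕ))
        (fun x hx => by
          have := hcon x (hmem hx)
          simp only [Finset.coe_range, Set.mem_Iio]; omega) (fun x _ y _ h => Fin.ext h)
    rw [hcard, Finset.card_range] at this
    omega
  set c := w.rotate a ha with hc
  have hcyc : c.IsCycle := hw.rotate ha
  have hbc : b ∈ c.support := by
    rw [hc]; exact (w.mem_support_rotate_iff a ha).2 hb
  obtain ⟨m, hm, hml⟩ := Walk.mem_support_iff_exists_getVert.1 hbc
  have hlow0 : ((c.getVert 0 : Fin n) : ℕ) < 2 * k - 1 := by simpa using hak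
  have hlow1 : ((c.getVert c.length : Fin n) : ℕ) < 2 * k - 1 := by simpa using hak
  have hadj : ∀ i < c.length, (cactusB n k).Adj (c.getVert i) (c.getVert (i + 1)) :=
    fun i hi => c.adj_getVert_succ hi
  have hex : ∃ i, 2 * k - 1 < ((c.getVert i : Fin n) : ℕ) := ⟨m, by rw [hm]; exact hbk⟩
  obtain ⟨i, hi, hmin⟩ : ∃ i, 2 * k - 1 < ((c.getVert i : Fin n) : ℕ) ∧
      ∀ j < i, ¬ 2 * k - 1 < ((c.getVert j : Fin n) : ℕ) :=
    ⟨Nat.find hex, Nat.find_spec hex, fun j hj => Nat.find_min hex hj⟩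
  obtain ⟨j, ⟨hjl, hj⟩, hmax⟩ := exists_max_nat
    (fun j => j ≤ c.length ∧ 2 * k - 1 < ((c.getVert j : Fin n) : ℕ)) c.length
    ⟨m, hml, by rw [hm]; exact hbk⟩ (fun j h => h.1)
  have him : i ≤ m := by
    by_contra! h
    exact hmin m h (by rw [hm]; exact hbk)
  have hmj : m ≤ j := hmax m ⟨hml, by rw [hm]; exact hbk⟩
  have hi0 : i ≠ 0 := by rintro rfl; omega
  have hjl' : j ≠ c.length := by rintro rfl; omega
  have e1 : ((c.getVert (i - 1) : Fin n) : ℕ) = 2 * k - 1 := by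
    have h1 := hadj (i - 1) (by omega)
    rw [show i - 1 + 1 = i by omega, cactusB_adj] at h1
    have h2 := hmin (i - 1) (by omega)
    omega
  have e2 : ((c.getVert (j + 1) : Fin n) : ℕ) = 2 * k - 1 := by
    have h1 := hadj j (by omega)
    rw [cactusB_adj] at h1
    have h2 : ¬ 2 * k - 1 < ((c.getVert (j + 1) : Fin n) : ℕ) := fun h => by
      have := hmax (j + 1) ⟨by omega, h⟩
      omega
    omega
  have hi1 : i - 1 ≠ 0 := by
    intro h
    rw [h] at e1
    omega
  have := hcyc.getVert_injOn (x₁ := i - 1) (show 1 ≤ i - 1 ∧ i - 1 ≤ c.length by omega)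
    (x₂ := j + 1) (show 1 ≤ j + 1 ∧ j + 1 ≤ c.length by omega) (Fin.ext (e1.trans e2.symm))
  omega

lemma cactusB_not_colorable {k n : ℕ} (hk : 2 ≤ k) (hn : 3 ≤ n) :
    ¬ (cactusB n k).Colorable 2 := by
  rintro ⟨C⟩
  have key : ∀ x y : Fin n, (x : ℕ) < 3 → (y : ℕ) < 3 → x ≠ y → C x ≠ C y := fun x y hx hy hxy =>
    C.valid (cactusB_adj.2 ⟨hxy, Or.inl ⟨by omega, by omega⟩⟩)
  have h1 := key ⟨0, by omega⟩ ⟨1, by omega⟩ (by simp) (by simp) (by simp)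
  have h2 := key ⟨0, by omega⟩ ⟨2, by omega⟩ (by simp) (by simp) (by simp)
  have h3 := key ⟨1, by omega⟩ ⟨2, by omega⟩ (by simp) (by simp) (by simp)
  omega

lemma ds_of_complete {K : Finset V} (hK : ∀ u ∈ K, ∀ v ∈ K, u ≠ v → G.Adj u v) :
    ds G K = K.card * (K.card - 1) := by
  rw [ds, ← smul_eq_mul, ← Finset.sum_const]
  refine Finset.sum_congr rfl fun v hv => ?_
  rw [← Finset.card_erase_of_mem hv]
  congr 1
  ext u
  rw [mem_nb, Finset.mem_erase]
  exact ⟨fun h => ⟨h.2.ne', h.1⟩, fun h => ⟨h.2, hK v hv u h.2 h.1.symm⟩⟩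

/-- Each vertex outside the block of the first `2k` vertices has exactly one neighbour in it, the
cut vertex. -/
lemma edgeCount_cactusB {k n : ℕ} (hk : 2 ≤ k) (hn : n = 4 * k - 2 ∨ n = 4 * k - 1) :
    edgeCount (cactusB n k) = n ^ 2 / 4 := by
  classical
  set A : Finset (Fin n) := Finset.univ.filter fun v => (v : ℕ) < 2 * k with hA
  have mA : ∀ v, v ∈ A ↔ (v : ℕ) < 2 * k := by simp [hA]
  have mB : ∀ v, v ∈ Aᶜ ↔ 2 * k ≤ (v : ℕ) := by simp [hA]
  have hAc : A.card = 2 * k := by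
    rw [hA, Fin.card_filter_val_lt]; omega
  have hBc : Aᶜ.card = n - 2 * k := by rw [Finset.card_compl, hAc, Fintype.card_fin]
  have hcut : ∀ a ∈ Aᶜ, (nb (cactusB n k) A a).card = 1 := by
    intro a ha
    rw [mB] at ha
    rw [Finset.card_eq_one]
    refine ⟨⟨2 * k - 1, by omega⟩, ?_⟩
    ext u
    rw [mem_nb, mA, cactusB_adj, Finset.mem_singleton, Fin.ext_iff, ne_eq, Fin.ext_iff]
    simp only
    omega
  have e1 := ds_union (G := cactusB n k) (disjoint_compl_left (a := A))
  rw [Finset.sum_congr rfl hcut, Finset.sum_const, smul_eq_mul, mul_one,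
    Finset.union_comm, Finset.union_compl, ds_univ_eq,
    ds_of_complete (K := A) fun u hu v hv h =>
      cactusB_adj.2 ⟨h, Or.inl ⟨(mA u).1 hu, (mA v).1 hv⟩⟩,
    ds_of_complete (K := Aᶜ) fun u hu v hv h => cactusB_adj.2 ⟨h, Or.inr
      ⟨by have := (mB u).1 hu; omega, by have := (mB v).1 hv; omega⟩⟩, hAc, hBc] at e1
  generalize edgeCount (cactusB n k) = m at e1 ⊢
  obtain ⟨j, rfl⟩ : ∃ j, k = j + 1 := ⟨k - 1, by omega⟩
  rcases hn with rfl | rfl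
  · rw [show 4 * (j + 1) - 2 - 2 * (j + 1) = 2 * j by omega,
      show 2 * (j + 1) - 1 = 2 * j + 1 by omega] at e1
    rw [show 4 * (j + 1) - 2 = 4 * j + 2 by omega,
      show (4 * j + 2) ^ 2 = 4 * (4 * j * j + 4 * j + 1) by ring,
      Nat.mul_div_cancel_left _ (by omega)]
    obtain ⟨i, rfl⟩ : ∃ i, j = i + 1 := ⟨j - 1, by omega⟩
    rw [show 2 * (i + 1) - 1 = 2 * i + 1 by omega] at e1
    linarith
  · rw [show 4 * (j + 1) - 1 - 2 * (j + 1) = 2 * j + 1 by omega,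
      show 2 * (j + 1) - 1 = 2 * j + 1 by omega, Nat.add_sub_cancel] at e1
    rw [show 4 * (j + 1) - 1 = 4 * j + 3 by omega,
      show (4 * j + 3) ^ 2 / 4 = 4 * (j * j) + 6 * j + 2 by
        rw [show (4 * j + 3) ^ 2 = 4 * (4 * (j * j) + 6 * j + 2) + 1 by ring]; omega]
    linarith

lemma edgeCount_cactusB_eq_exC {k n : ℕ} (hk : 2 ≤ k) (hn : n = 4 * k - 2 ∨ n = 4 * k - 1) :
    edgeCount (cactusB n k) = exC n k := by
  have hub : ∀ m ∈ {m | ∃ G : SimpleGraph (Fin n),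
      ¬ ContainsCycleLength G (2 * k + 1) ∧ edgeCount G = m}, m ≤ n ^ 2 / 4 := by
    rintro _ ⟨G, hG, rfl⟩
    exact edgeCount_le hk hn G hG
  have hmem : edgeCount (cactusB n k) ∈ {m | ∃ G : SimpleGraph (Fin n),
      ¬ ContainsCycleLength G (2 * k + 1) ∧ edgeCount G = m} :=
    ⟨_, cactusB_not_containsCycleLength (by omega), rfl⟩
  refine le_antisymm (le_csSup ⟨_, hub⟩ hmem) ?_
  rw [edgeCount_cactusB hk hn]
  exact csSup_le ⟨_, hmem⟩ hub

end OddCycleExt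

/-- For `k ≥ 2` and `n ∈ {4k-2, 4k-1}`, the cactus `B(n; 2k, n-2k+1)` contains no cycle of
length `2k+1`, is not bipartite, and has exactly `⌊n²/4⌋` edges; hence it is an extremal
`C_{2k+1}`-free graph not isomorphic to the Turán graph `T_{n,2}`, so `T_{n,2}` is not the
unique extremal graph for these `n` and the Simonovits threshold `n₀(C_{2k+1})` is at
least `4k`. -/
theorem cactus_extremal_near_threshold (k n : ℕ) (hk : 2 ≤ k)
    (hn : n = 4 * k - 2 ∨ n = 4 * k - 1) :
    ¬ ContainsCycleLength (cactusB n k) (2 * k + 1) ∧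
    ¬ (cactusB n k).Colorable 2 ∧
    edgeCount (cactusB n k) = n ^ 2 / 4 ∧
    edgeCount (cactusB n k) = exC n k ∧
    ¬ Nonempty
      (cactusB n k ≃g completeBipartiteGraph (Fin ((n + 1) / 2)) (Fin (n / 2))) := by
  have hcol := OddCycleExt.cactusB_not_colorable (n := n) hk (by omega)
  refine ⟨OddCycleExt.cactusB_not_containsCycleLength (by omega), hcol,
    OddCycleExt.edgeCount_cactusB hk hn, OddCycleExt.edgeCount_cactusB_eq_exC hk hn, ?_⟩
  rintro ⟨e⟩
  have hbi := (CompleteBipartiteGraph.bicoloring (Fin ((n + 1) / 2)) (Fin (n / 2))).colorable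
  exact hcol (by simpa using hbi.of_hom e.toHom)
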